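/- arXiv:1803.05975 — 4 statements merged into one kernel-verified Lean document; each statement's English description precedes it below -/
import Mathlib

section
/- Let g : ℝⁿ → ℝ be a differentiable convex function, E a real m×n matrix and q ∈ ℝᵐ. If z₁ = (x₁, ν₁) and z₂ = (x₂, ν₂) are two differentiable solutions of the primal-dual dynamics on an interval, then for every t, (d/dt)‖z₁(t) − z₂(t)‖₂² = −2⟨x₁(t) − x₂(t), ∇g(x₁(t)) − ∇g(x₂(t))⟩ ≤ 0; in particular t ↦ ‖z₁(t) − z₂(t)‖₂ is non-increasing. -/
open Matrix

/-!
The coupling `(x, ν) ↦ (-Eᵀν, Ex)` is skew-symmetric and the offset `q` cancels in differences, so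
along two solutions only the gradient term survives in the derivative of `‖z₁ - z₂‖²`. That term is
nonpositive because adding the first-order inequalities `g y ≥ g x + ⟨∇g x, y - x⟩` for the pairs
`(x, y)` and `(y, x)` shows that the gradient is monotone.
-/

section ConvexGradient

variable {F : Type*} [NormedAddCommGroup F] [NormedSpace ℝ F] {s : Set F} {f : F → ℝ} {x y : F}

theorem apply_sub_le_of_convexOn_of_hasFDerivWithinAt {f' : F →L[ℝ] ℝ} (hf : ConvexOn ℝ s f)
    (hx : x ∈ s) (hy : y ∈ s) (hf' : HasFDerivWithinAt f f' s x) : f' (y - x) ≤ f y - f x := by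
  let line : ℝ →ᵃ[ℝ] F := AffineMap.lineMap x y
  have line_zero : line 0 = x := AffineMap.lineMap_apply_zero x y
  have line_one : line 1 = y := AffineMap.lineMap_apply_one x y
  have hderiv : HasDerivWithinAt (f ∘ line) (f' (y - x)) (line ⁻¹' s) 0 :=
    HasFDerivWithinAt.comp_hasDerivWithinAt 0 (line_zero.symm ▸ hf')
      AffineMap.hasDerivWithinAt_lineMap (Set.mapsTo_preimage line s)
  have hslope : f' (y - x) ≤ slope (f ∘ line) 0 1 :=
    (hf.comp_affineMap line).le_slope_of_hasDerivWithinAt (by simpa [line_zero] using hx)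
      (by simpa [line_one] using hy) one_pos hderiv
  simpa [slope_def_field, line_zero, line_one] using hslope

theorem hasFDerivWithinAt_sub_apply_sub_nonneg_of_convexOn {fx' fy' : F →L[ℝ] ℝ}
    (hf : ConvexOn ℝ s f) (hx : x ∈ s) (hy : y ∈ s) (hfx' : HasFDerivWithinAt f fx' s x)
    (hfy' : HasFDerivWithinAt f fy' s y) : 0 ≤ (fx' - fy') (x - y) := by
  have hxy : fx' (y - x) ≤ f y - f x :=
    apply_sub_le_of_convexOn_of_hasFDerivWithinAt hf hx hy hfx'
  have hyx : fy' (x - y) ≤ f x - f y :=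
    apply_sub_le_of_convexOn_of_hasFDerivWithinAt hf hy hx hfy'
  rw [← neg_sub x y, map_neg] at hxy
  rw [_root_.sub_apply]
  linarith

theorem dotProduct_gradient_sub_nonneg_of_convexOn {ι : Type*} [Fintype ι] {g : (ι → ℝ) → ℝ}
    {G : (ι → ℝ) → ι → ℝ} (hg : Differentiable ℝ g)
    (hG : ∀ x v, fderiv ℝ g x v = G x ⬝ᵥ v) (hconv : ConvexOn ℝ Set.univ g) (x y : ι → ℝ) :
    0 ≤ (x - y) ⬝ᵥ (G x - G y) := by
  have hmono : 0 ≤ (fderiv ℝ g x - fderiv ℝ g y) (x - y) :=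
    hasFDerivWithinAt_sub_apply_sub_nonneg_of_convexOn hconv (Set.mem_univ x) (Set.mem_univ y)
      (hg x).hasFDerivAt.hasFDerivWithinAt (hg y).hasFDerivAt.hasFDerivWithinAt
  rwa [_root_.sub_apply, hG, hG, ← sub_dotProduct, dotProduct_comm] at hmono

end ConvexGradient

theorem hasDerivWithinAt_dotProduct {𝕜 A ι : Type*} [NontriviallyNormedField 𝕜] [NormedRing A]
    [NormedAlgebra 𝕜 A] [Fintype ι] {u v : 𝕜 → ι → A} {u' v' : ι → A} {s : Set 𝕜} {t : 𝕜}
    (hu : HasDerivWithinAt u u' s t) (hv : HasDerivWithinAt v v' s t) :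
    HasDerivWithinAt (fun r => u r ⬝ᵥ v r) (u' ⬝ᵥ v t + u t ⬝ᵥ v') s t := by
  have hterm (i : ι) :
      HasDerivWithinAt (fun r => u r i * v r i) (u' i * v t i + u t i * v' i) s t :=
    (hasDerivWithinAt_pi.mp hu i).mul (hasDerivWithinAt_pi.mp hv i)
  simpa only [dotProduct, Finset.sum_add_distrib] using
    HasDerivWithinAt.fun_sum (u := Finset.univ) fun i _ => hterm i

theorem primalDual_sub_dotProduct_sub {R ι κ : Type*} [CommRing R] [Fintype ι] [Fintype κ]
    (E : Matrix κ ι R) (q : κ → R) (x₁ x₂ p₁ p₂ : ι → R) (ν₁ ν₂ : κ → R) :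
    (x₁ - x₂) ⬝ᵥ (-p₁ - Eᵀ *ᵥ ν₁ - (-p₂ - Eᵀ *ᵥ ν₂)) +
      (ν₁ - ν₂) ⬝ᵥ (E *ᵥ x₁ - q - (E *ᵥ x₂ - q)) = -((x₁ - x₂) ⬝ᵥ (p₁ - p₂)) := by
  have hprimal : -p₁ - Eᵀ *ᵥ ν₁ - (-p₂ - Eᵀ *ᵥ ν₂) = -(p₁ - p₂) - Eᵀ *ᵥ (ν₁ - ν₂) := by
    rw [mulVec_sub]; abel
  have hdual : E *ᵥ x₁ - q - (E *ᵥ x₂ - q) = E *ᵥ (x₁ - x₂) := by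
    rw [mulVec_sub]; abel
  rw [hprimal, hdual, dotProduct_sub, dotProduct_neg, dotProduct_transpose_mulVec]
  ring

section PrimalDual

variable {ι κ : Type*} [Fintype ι] [Fintype κ]

/-- The curve `(x, ν)` solves the primal-dual dynamics `ẋ = -G(x) - Eᵀν`, `ν̇ = Ex - q` at every
time in `I`. The operator `G` takes the place of the gradient of the objective, and the derivatives
are taken within `I`, hence are one-sided at the endpoints of an interval. -/
structure IsPrimalDualSolutionOn (G : (ι → ℝ) → ι → ℝ) (E : Matrix κ ι ℝ) (q : κ → ℝ) (I : Set ℝ)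
    (x : ℝ → ι → ℝ) (ν : ℝ → κ → ℝ) : Prop where
  primal : ∀ t ∈ I, HasDerivWithinAt x (-G (x t) - Eᵀ *ᵥ ν t) I t
  dual : ∀ t ∈ I, HasDerivWithinAt ν (E *ᵥ x t - q) I t

variable {G : (ι → ℝ) → ι → ℝ} {E : Matrix κ ι ℝ} {q : κ → ℝ} {I : Set ℝ}
  {x₁ x₂ : ℝ → ι → ℝ} {ν₁ ν₂ : ℝ → κ → ℝ}

theorem IsPrimalDualSolutionOn.hasDerivWithinAt_sq_dist
    (h₁ : IsPrimalDualSolutionOn G E q I x₁ ν₁) (h₂ : IsPrimalDualSolutionOn G E q I x₂ ν₂)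
    {t : ℝ} (ht : t ∈ I) :
    HasDerivWithinAt
      (fun s => (x₁ s - x₂ s) ⬝ᵥ (x₁ s - x₂ s) + (ν₁ s - ν₂ s) ⬝ᵥ (ν₁ s - ν₂ s))
      (-2 * ((x₁ t - x₂ t) ⬝ᵥ (G (x₁ t) - G (x₂ t)))) I t := by
  have hx := (h₁.primal t ht).fun_sub (h₂.primal t ht)
  have hν := (h₁.dual t ht).fun_sub (h₂.dual t ht)
  refine ((hasDerivWithinAt_dotProduct hx hx).fun_add
    (hasDerivWithinAt_dotProduct hν hν)).congr_deriv ?_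
  rw [dotProduct_comm _ (x₁ t - x₂ t), dotProduct_comm _ (ν₁ t - ν₂ t)]
  linear_combination
    2 * primalDual_sub_dotProduct_sub E q (x₁ t) (x₂ t) (G (x₁ t)) (G (x₂ t)) (ν₁ t) (ν₂ t)

theorem stmt0_general (hG : ∀ x y, 0 ≤ (x - y) ⬝ᵥ (G x - G y)) (hI : Convex ℝ I)
    (h₁ : IsPrimalDualSolutionOn G E q I x₁ ν₁) (h₂ : IsPrimalDualSolutionOn G E q I x₂ ν₂) :
    (∀ t ∈ I,
      HasDerivWithinAt
        (fun s => (x₁ s - x₂ s) ⬝ᵥ (x₁ s - x₂ s) + (ν₁ s - ν₂ s) ⬝ᵥ (ν₁ s - ν₂ s))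
        (-2 * ((x₁ t - x₂ t) ⬝ᵥ (G (x₁ t) - G (x₂ t)))) I t ∧
      -2 * ((x₁ t - x₂ t) ⬝ᵥ (G (x₁ t) - G (x₂ t))) ≤ 0) ∧
    AntitoneOn (fun t =>
      Real.sqrt ((x₁ t - x₂ t) ⬝ᵥ (x₁ t - x₂ t) + (ν₁ t - ν₂ t) ⬝ᵥ (ν₁ t - ν₂ t))) I := by
  have hderiv := fun t (ht : t ∈ I) => h₁.hasDerivWithinAt_sq_dist h₂ ht
  have hnonpos (t : ℝ) : -2 * ((x₁ t - x₂ t) ⬝ᵥ (G (x₁ t) - G (x₂ t))) ≤ 0 :=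
    mul_nonpos_of_nonpos_of_nonneg (by norm_num) (hG _ _)
  have hanti := antitoneOn_of_hasDerivWithinAt_nonpos hI
    (fun t ht => (hderiv t ht).continuousWithinAt)
    (fun t ht => (hderiv t (interior_subset ht)).mono interior_subset) (fun t _ => hnonpos t)
  exact ⟨fun t ht => ⟨hderiv t ht, hnonpos t⟩, Real.sqrt_monotone.comp_antitoneOn hanti⟩

end PrimalDual

/-- For a differentiable convex objective `g` with gradient `G`
(`fderiv ℝ g x v = G x ⬝ᵥ v`), any two solutions `z₁ = (x₁, ν₁)`, `z₂ = (x₂, ν₂)` of the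
primal-dual dynamics `ẋ = -∇g(x) - Eᵀν`, `ν̇ = Ex - q` satisfy
`(d/dt)‖z₁ - z₂‖₂² = -2⟨x₁ - x₂, ∇g(x₁) - ∇g(x₂)⟩ ≤ 0`, and `t ↦ ‖z₁(t) - z₂(t)‖₂` is
non-increasing. -/
theorem stmt0 {n m : ℕ} (g : (Fin n → ℝ) → ℝ) (G : (Fin n → ℝ) → (Fin n → ℝ))
    (hg_diff : Differentiable ℝ g)
    (hg_grad : ∀ x v, fderiv ℝ g x v = G x ⬝ᵥ v)
    (hg_conv : ConvexOn ℝ Set.univ g)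
    (E : Matrix (Fin m) (Fin n) ℝ) (q : Fin m → ℝ)
    (x₁ x₂ : ℝ → Fin n → ℝ) (ν₁ ν₂ : ℝ → Fin m → ℝ)
    (h₁x : ∀ t, HasDerivAt x₁ (-(G (x₁ t)) - Eᵀ *ᵥ ν₁ t) t)
    (h₁ν : ∀ t, HasDerivAt ν₁ (E *ᵥ x₁ t - q) t)
    (h₂x : ∀ t, HasDerivAt x₂ (-(G (x₂ t)) - Eᵀ *ᵥ ν₂ t) t)
    (h₂ν : ∀ t, HasDerivAt ν₂ (E *ᵥ x₂ t - q) t) :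
    (∀ t : ℝ,
      HasDerivAt
        (fun s => (x₁ s - x₂ s) ⬝ᵥ (x₁ s - x₂ s) + (ν₁ s - ν₂ s) ⬝ᵥ (ν₁ s - ν₂ s))
        (-2 * ((x₁ t - x₂ t) ⬝ᵥ (G (x₁ t) - G (x₂ t)))) t ∧
      -2 * ((x₁ t - x₂ t) ⬝ᵥ (G (x₁ t) - G (x₂ t))) ≤ 0) ∧
    Antitone (fun t =>
      Real.sqrt ((x₁ t - x₂ t) ⬝ᵥ (x₁ t - x₂ t) + (ν₁ t - ν₂ t) ⬝ᵥ (ν₁ t - ν₂ t))) := by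
  simpa only [hasDerivWithinAt_univ, antitoneOn_univ, Set.mem_univ, true_imp_iff] using
    stmt0_general (dotProduct_gradient_sub_nonneg_of_convexOn hg_diff hg_grad hg_conv) convex_univ
      ⟨fun t _ => (h₁x t).hasDerivWithinAt, fun t _ => (h₁ν t).hasDerivWithinAt⟩
      ⟨fun t _ => (h₂x t).hasDerivWithinAt, fun t _ => (h₂ν t).hasDerivWithinAt⟩
end

section
/- Let H be a symmetric positive definite n×n real matrix and E a real m×n matrix. If 0 < α < 1/(‖EH^{−1/2}‖₂² + ‖H‖₂/4), where ‖·‖₂ denotes the spectral norm and H^{−1/2} is the inverse of the positive definite square root of H, then the matrix H − αEᵀE − (α/4)H² is symmetric positive definite. -/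
open Matrix
open scoped MatrixOrder

/-- The spectral (operator 2-)norm of a real matrix. -/
noncomputable def spectralNorm2 {m n : ℕ} (E : Matrix (Fin m) (Fin n) ℝ) : ℝ :=
  ‖LinearMap.toContinuousLinearMap (Matrix.toEuclideanLin E)‖

/-!
Write `S = H^{1/2}` and `F = E S⁻¹`. Conjugating `A = α EᵀE + β H²` by `S⁻¹` gives `α FᵀF + β H`,
of norm at most `|α| ‖F‖² + |β| ‖H‖` by the C⋆-identity. If this is less than `1`, then
`1 - S⁻¹AS⁻¹` is positive definite, hence so is its conjugate `S(1 - S⁻¹AS⁻¹)S = H - A`.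
-/

section StarOrderedRing

open scoped Ring

variable {A : Type*} [NormedRing A] [StarRing A] [NormedAlgebra ℝ A] [PartialOrder A]
  [StarOrderedRing A] [NonnegSpectrumClass ℝ A]
  [IsometricContinuousFunctionalCalculus ℝ A IsSelfAdjoint]

theorem isStrictlyPositive_one_sub_of_norm_lt_one {a : A} (ha : IsSelfAdjoint a)
    (hnorm : ‖a‖ < 1) : IsStrictlyPositive (1 - a) := by
  have hcfc : cfc (fun x : ℝ ↦ 1 - x) a = 1 - a := by
    rw [cfc_sub .., cfc_const_one .., cfc_id' ..]
  rw [← hcfc, cfc_isStrictlyPositive_iff ..]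
  intro x hx
  have hx_norm : ‖x‖ ≤ ‖a‖ := IsometricContinuousFunctionalCalculus.norm_spectrum_le a hx
  linarith [Real.le_norm_self x]

theorem isStrictlyPositive_sub_of_norm_conjSqrt_lt_one {a c : A} (hc : IsStrictlyPositive c)
    (ha : IsSelfAdjoint a) (hnorm : ‖CFC.conjSqrt c⁻¹ʳ a‖ < 1) : IsStrictlyPositive (c - a) := by
  have hconj : CFC.conjSqrt c (1 - CFC.conjSqrt c⁻¹ʳ a) = c - a := by
    rw [map_sub, CFC.conjSqrt_one c, CFC.conjSqrt_conjSqrt_ringInverse c a]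
  rw [← hconj, CFC.isStrictlyPositive_conjSqrt_iff c _]
  exact isStrictlyPositive_one_sub_of_norm_lt_one
    (ha.conjugate_self (CFC.sqrt_nonneg _).isSelfAdjoint) hnorm

end StarOrderedRing

section Matrix

open scoped ComplexOrder Ring Matrix.Norms.L2Operator

variable {𝕜 m n : Type*} [RCLike 𝕜] [Fintype m] [Fintype n] [DecidableEq n]

theorem l2_opNorm_real_smul (r : ℝ) (A : Matrix m n 𝕜) : ‖r • A‖ = |r| * ‖A‖ := by
  rw [← RCLike.norm_ofReal (K := 𝕜), ← norm_smul, ← algebraMap_smul 𝕜 r A,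
    RCLike.algebraMap_eq_ofReal]

theorem posDef_sub_of_l2_opNorm_lt_one {H A : Matrix n n 𝕜} (hH : H.PosDef)
    (hA : A.IsHermitian) (hnorm : ‖(CFC.sqrt H)⁻¹ * A * (CFC.sqrt H)⁻¹‖ < 1) :
    (H - A).PosDef := by
  -- The scoped operator-norm instance makes matrices a normed algebra over `𝕜` only.
  let : NormedAlgebra ℝ (Matrix n n 𝕜) :=
    { norm_smul_le := fun r B ↦ (l2_opNorm_real_smul r B).le }
  have hconj : CFC.conjSqrt H⁻¹ʳ A = (CFC.sqrt H)⁻¹ * A * (CFC.sqrt H)⁻¹ := by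
    rw [CFC.conjSqrt_apply, CFC.sqrt_ringInverse, nonsing_inv_eq_ringInverse]
  rw [← hconj] at hnorm
  exact (isStrictlyPositive_sub_of_norm_conjSqrt_lt_one hH.isStrictlyPositive hA hnorm).posDef

theorem inv_sqrt_mul_conjTranspose_mul_self_mul_inv_sqrt (H : Matrix n n 𝕜) (E : Matrix m n 𝕜) :
    (CFC.sqrt H)⁻¹ * (Eᴴ * E) * (CFC.sqrt H)⁻¹ =
      (E * (CFC.sqrt H)⁻¹)ᴴ * (E * (CFC.sqrt H)⁻¹) := by
  have hherm : ((CFC.sqrt H)⁻¹)ᴴ = (CFC.sqrt H)⁻¹ :=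
    (CFC.sqrt_nonneg H).posSemidef.inv.isHermitian
  simp only [conjTranspose_mul, hherm, Matrix.mul_assoc]

theorem inv_sqrt_mul_mul_self_mul_inv_sqrt {H : Matrix n n 𝕜} (hH : H.PosDef) :
    (CFC.sqrt H)⁻¹ * (H * H) * (CFC.sqrt H)⁻¹ = H := by
  have hdet : IsUnit (CFC.sqrt H).det :=
    (isUnit_iff_isUnit_det _).mp hH.isStrictlyPositive.isUnit_cfcSqrt
  have hsqrt : CFC.sqrt H * CFC.sqrt H = H := CFC.sqrt_mul_sqrt_self H hH.posSemidef.nonneg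
  calc (CFC.sqrt H)⁻¹ * (H * H) * (CFC.sqrt H)⁻¹
      = (CFC.sqrt H)⁻¹ * CFC.sqrt H * (CFC.sqrt H * CFC.sqrt H) *
          (CFC.sqrt H * (CFC.sqrt H)⁻¹) := by
        nth_rw 2 3 [← hsqrt]
        simp only [Matrix.mul_assoc]
    _ = H := by
        rw [nonsing_inv_mul _ hdet, mul_nonsing_inv _ hdet, Matrix.one_mul, Matrix.mul_one, hsqrt]

theorem stmt3_general {H : Matrix n n 𝕜} (hH : H.PosDef) (E : Matrix m n 𝕜) {α β : ℝ}
    (hαβ : |α| * ‖E * (CFC.sqrt H)⁻¹‖ ^ 2 + |β| * ‖H‖ < 1) :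
    (H - α • (Eᴴ * E) - β • (H * H)).PosDef := by
  have hherm : (α • (Eᴴ * E) + β • (H * H)).IsHermitian := by
    simp [IsHermitian, hH.isHermitian.eq]
  have hconj : (CFC.sqrt H)⁻¹ * (α • (Eᴴ * E) + β • (H * H)) * (CFC.sqrt H)⁻¹ =
      α • ((E * (CFC.sqrt H)⁻¹)ᴴ * (E * (CFC.sqrt H)⁻¹)) + β • H := by
    rw [Matrix.mul_add, Matrix.add_mul, mul_smul_comm, mul_smul_comm, smul_mul_assoc,
      smul_mul_assoc, inv_sqrt_mul_conjTranspose_mul_self_mul_inv_sqrt,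
      inv_sqrt_mul_mul_self_mul_inv_sqrt hH]
  rw [sub_sub]
  refine posDef_sub_of_l2_opNorm_lt_one hH hherm ?_
  calc ‖(CFC.sqrt H)⁻¹ * (α • (Eᴴ * E) + β • (H * H)) * (CFC.sqrt H)⁻¹‖
      ≤ ‖α • ((E * (CFC.sqrt H)⁻¹)ᴴ * (E * (CFC.sqrt H)⁻¹))‖ + ‖β • H‖ :=
        hconj ▸ norm_add_le _ _
    _ = |α| * ‖E * (CFC.sqrt H)⁻¹‖ ^ 2 + |β| * ‖H‖ := by
        rw [l2_opNorm_real_smul, l2_opNorm_real_smul, l2_opNorm_conjTranspose_mul_self, sq]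
    _ < 1 := hαβ

theorem spectralNorm2_eq_l2_opNorm {k l : ℕ} (A : Matrix (Fin k) (Fin l) ℝ) :
    spectralNorm2 A = ‖A‖ :=
  rfl

end Matrix

/-- For `H` symmetric positive definite and
`0 < α < 1/(‖EH^{-1/2}‖₂² + ‖H‖₂/4)` (where `H^{-1/2}` is the inverse of the positive
definite square root of `H`), the matrix `H - αEᵀE - (α/4)H²` is (symmetric) positive
definite. -/
theorem stmt3 {n m : ℕ} (H : Matrix (Fin n) (Fin n) ℝ) (hH : H.PosDef)
    (E : Matrix (Fin m) (Fin n) ℝ) (α : ℝ) (hα0 : 0 < α)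
    (hα : α < 1 / (spectralNorm2 (E * (CFC.sqrt H)⁻¹) ^ 2 + spectralNorm2 H / 4)) :
    (H - α • (Eᵀ * E) - (α / 4) • (H * H)).PosDef := by
  rw [lt_div_iff₀ (one_div_pos.mp (hα0.trans hα)), spectralNorm2_eq_l2_opNorm,
    spectralNorm2_eq_l2_opNorm] at hα
  exact stmt3_general hH E (by rw [abs_of_pos hα0, abs_of_pos (by positivity)]; linarith)
end

section
/- Let g(x) = (1/2)xᵀHx + cᵀx with H symmetric positive definite, E a real m×n matrix, q ∈ ℝᵐ, and 0 < α < 1/‖E‖₂. Let z₁ and z₂ be two differentiable solutions of the primal-dual dynamics ẋ = −Hx − c − Eᵀν, ν̇ = Ex − q, and write δx(t) = x₁(t) − x₂(t), δν(t) = ν₁(t) − ν₂(t). Then for every t, (d/dt)[‖δx + αEᵀδν‖₂² + δνᵀ(I − α²EEᵀ)δν] = −2 δxᵀ(H − αEᵀE − (α/4)H²)δx − 2α‖Eᵀδν + (1/2)Hδx‖₂². -/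
open Matrix

/-! The difference `(d, v)` of two solutions follows the homogeneous linear system
`d' = -H d - Eᵀ v`, `v' = E d`. In the weighted norm the terms `α² ‖Eᵀ v‖²` cancel, leaving
`‖d‖² + 2 α d ⬝ Eᵀ v + ‖v‖²`. The skew coupling through `E` contributes nothing to the derivative
of `‖d‖² + ‖v‖²`, which is `-2 d ⬝ H d`, while the cross term contributes
`2 α (‖E d‖² - ‖Eᵀ v‖² - H d ⬝ Eᵀ v)`. Completing the square in `Eᵀ v` leaves a remainder in
`‖H d‖²`, which is `d ⬝ H² d` because `H` is symmetric. -/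

section Deriv

variable {𝕜 𝔸 ι κ : Type*} [NontriviallyNormedField 𝕜] [NormedRing 𝔸] [NormedAlgebra 𝕜 𝔸]
  [Fintype ι] {t : 𝕜}

theorem hasDerivAt_dotProduct {u v : 𝕜 → ι → 𝔸} {u' v' : ι → 𝔸}
    (hu : HasDerivAt u u' t) (hv : HasDerivAt v v' t) :
    HasDerivAt (fun s => u s ⬝ᵥ v s) (u' ⬝ᵥ v t + u t ⬝ᵥ v') t := by
  rw [hasDerivAt_pi] at hu hv
  simp only [dotProduct, ← Finset.sum_add_distrib]
  exact HasDerivAt.fun_sum fun i _ => (hu i).fun_mul (hv i)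

theorem hasDerivAt_mulVec [Finite κ] (A : Matrix κ ι 𝔸) {v : 𝕜 → ι → 𝔸} {v' : ι → 𝔸}
    (hv : HasDerivAt v v' t) : HasDerivAt (fun s => A *ᵥ v s) (A *ᵥ v') t := by
  have := Fintype.ofFinite κ
  refine hasDerivAt_pi.2 fun i => ?_
  exact (hasDerivAt_dotProduct (hasDerivAt_const t (A i)) hv).congr_deriv
    (by rw [zero_dotProduct, zero_add, mulVec])

end Deriv

section PrimalDual

variable {ι κ : Type*} [Fintype ι]

theorem hasDerivAt_dual_sub [Finite κ] {E : Matrix κ ι ℝ} {q : κ → ℝ} {ν₁ ν₂ : ℝ → κ → ℝ}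
    {y₁ y₂ : ι → ℝ} {t : ℝ}
    (h₁ : HasDerivAt ν₁ (E *ᵥ y₁ - q) t) (h₂ : HasDerivAt ν₂ (E *ᵥ y₂ - q) t) :
    HasDerivAt (fun s => ν₁ s - ν₂ s) (E *ᵥ (y₁ - y₂)) t := by
  have := Fintype.ofFinite κ
  refine (h₁.fun_sub h₂).congr_deriv ?_
  rw [mulVec_sub, sub_sub_sub_cancel_right]

variable [Fintype κ]

theorem hasDerivAt_primal_sub {H : Matrix ι ι ℝ} {c : ι → ℝ} {E : Matrix κ ι ℝ}
    {x₁ x₂ : ℝ → ι → ℝ} {y₁ y₂ : κ → ℝ} {t : ℝ}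
    (h₁ : HasDerivAt x₁ (-(H *ᵥ x₁ t) - c - Eᵀ *ᵥ y₁) t)
    (h₂ : HasDerivAt x₂ (-(H *ᵥ x₂ t) - c - Eᵀ *ᵥ y₂) t) :
    HasDerivAt (fun s => x₁ s - x₂ s) (-(H *ᵥ (x₁ t - x₂ t)) - Eᵀ *ᵥ (y₁ - y₂)) t := by
  refine (h₁.fun_sub h₂).congr_deriv ?_
  rw [mulVec_sub, mulVec_sub]
  abel

/-- The weighted squared norm `‖(d, v)‖_α²` in which distances between primal-dual trajectories are
measured. It is written with dot products because the norm of `ι → ℝ` is the supremum norm, and it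
is defined for every `α`, although it is positive definite only when `|α| * ‖E‖₂ < 1`. -/
def weightedNormSq [DecidableEq κ] (α : ℝ) (E : Matrix κ ι ℝ) (d : ι → ℝ) (v : κ → ℝ) : ℝ :=
  (d + α • (Eᵀ *ᵥ v)) ⬝ᵥ (d + α • (Eᵀ *ᵥ v)) + v ⬝ᵥ ((1 - α ^ 2 • (E * Eᵀ)) *ᵥ v)

theorem weightedNormSq_eq [DecidableEq κ] (α : ℝ) (E : Matrix κ ι ℝ) (d : ι → ℝ) (v : κ → ℝ) :
    weightedNormSq α E d v = d ⬝ᵥ d + 2 * α * (d ⬝ᵥ (Eᵀ *ᵥ v)) + v ⬝ᵥ v := by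
  have hgram : v ⬝ᵥ (E *ᵥ (Eᵀ *ᵥ v)) = (Eᵀ *ᵥ v) ⬝ᵥ (Eᵀ *ᵥ v) := by
    rw [dotProduct_transpose_mulVec]
  simp only [weightedNormSq, sub_mulVec, smul_mulVec, one_mulVec, ← mulVec_mulVec, dotProduct_add,
    add_dotProduct, dotProduct_sub, dotProduct_smul, smul_dotProduct, smul_eq_mul, hgram,
    dotProduct_comm (Eᵀ *ᵥ v) d]
  ring

theorem hasDerivAt_weightedNormSq [DecidableEq κ] (α : ℝ) (E : Matrix κ ι ℝ)
    {d : ℝ → ι → ℝ} {v : ℝ → κ → ℝ} {d' : ι → ℝ} {v' : κ → ℝ} {t : ℝ}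
    (hd : HasDerivAt d d' t) (hv : HasDerivAt v v' t) :
    HasDerivAt (fun s => weightedNormSq α E (d s) (v s))
      (2 * (d t ⬝ᵥ d') + 2 * α * (d' ⬝ᵥ (Eᵀ *ᵥ v t) + d t ⬝ᵥ (Eᵀ *ᵥ v')) + 2 * (v t ⬝ᵥ v')) t := by
  simp only [weightedNormSq_eq]
  have hcross := hasDerivAt_dotProduct hd (hasDerivAt_mulVec Eᵀ hv)
  refine (((hasDerivAt_dotProduct hd hd).fun_add (hcross.const_mul (2 * α))).fun_add
    (hasDerivAt_dotProduct hv hv)).congr_deriv ?_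
  rw [dotProduct_comm d', dotProduct_comm v', two_mul (d t ⬝ᵥ d'), two_mul (v t ⬝ᵥ v')]

theorem dissipation_eq_completed_square {H : Matrix ι ι ℝ} (hH : H.IsSymm) (E : Matrix κ ι ℝ)
    (α : ℝ) (d w : ι → ℝ) :
    -2 * (d ⬝ᵥ (H *ᵥ d)) + 2 * α * ((E *ᵥ d) ⬝ᵥ (E *ᵥ d) - (H *ᵥ d + w) ⬝ᵥ w) =
      -2 * (d ⬝ᵥ ((H - α • (Eᵀ * E) - (α / 4) • (H * H)) *ᵥ d)) -
        2 * α * ((w + (1 / 2 : ℝ) • (H *ᵥ d)) ⬝ᵥ (w + (1 / 2 : ℝ) • (H *ᵥ d))) := by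
  have hHH : d ⬝ᵥ (H *ᵥ (H *ᵥ d)) = (H *ᵥ d) ⬝ᵥ (H *ᵥ d) := by
    rw [← dotProduct_transpose_mulVec, hH.eq]
  simp only [sub_mulVec, smul_mulVec, ← mulVec_mulVec, dotProduct_sub, dotProduct_add,
    add_dotProduct, dotProduct_smul, smul_dotProduct, smul_eq_mul,
    dotProduct_transpose_mulVec, hHH, dotProduct_comm w (H *ᵥ d)]
  ring

theorem hasDerivAt_weightedNormSq_of_linear_flow [DecidableEq κ] {H : Matrix ι ι ℝ}
    (hH : H.IsSymm) (E : Matrix κ ι ℝ) (α : ℝ) {d : ℝ → ι → ℝ} {v : ℝ → κ → ℝ} {t : ℝ}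
    (hd : HasDerivAt d (-(H *ᵥ d t) - Eᵀ *ᵥ v t) t) (hv : HasDerivAt v (E *ᵥ d t) t) :
    HasDerivAt (fun s => weightedNormSq α E (d s) (v s))
      (-2 * (d t ⬝ᵥ ((H - α • (Eᵀ * E) - (α / 4) • (H * H)) *ᵥ d t)) -
        2 * α * ((Eᵀ *ᵥ v t + (1 / 2 : ℝ) • (H *ᵥ d t)) ⬝ᵥ
          (Eᵀ *ᵥ v t + (1 / 2 : ℝ) • (H *ᵥ d t)))) t := by
  refine (hasDerivAt_weightedNormSq α E hd hv).congr_deriv ?_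
  rw [← dissipation_eq_completed_square hH]
  have hcoupling : d t ⬝ᵥ (Eᵀ *ᵥ v t) = v t ⬝ᵥ (E *ᵥ d t) := dotProduct_transpose_mulVec E _ _
  have hgram : d t ⬝ᵥ (Eᵀ *ᵥ (E *ᵥ d t)) = (E *ᵥ d t) ⬝ᵥ (E *ᵥ d t) :=
    dotProduct_transpose_mulVec E _ _
  simp only [dotProduct_sub, dotProduct_neg, sub_dotProduct, neg_dotProduct, add_dotProduct,
    hcoupling, hgram]
  ring

theorem stmt6_general [DecidableEq κ] {H : Matrix ι ι ℝ} (hH : H.IsSymm) {c : ι → ℝ}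
    (E : Matrix κ ι ℝ) {q : κ → ℝ} (α : ℝ) {x₁ x₂ : ℝ → ι → ℝ} {ν₁ ν₂ : ℝ → κ → ℝ} {t : ℝ}
    (h₁x : HasDerivAt x₁ (-(H *ᵥ x₁ t) - c - Eᵀ *ᵥ ν₁ t) t)
    (h₁ν : HasDerivAt ν₁ (E *ᵥ x₁ t - q) t)
    (h₂x : HasDerivAt x₂ (-(H *ᵥ x₂ t) - c - Eᵀ *ᵥ ν₂ t) t)
    (h₂ν : HasDerivAt ν₂ (E *ᵥ x₂ t - q) t) :
    HasDerivAt (fun s => weightedNormSq α E (x₁ s - x₂ s) (ν₁ s - ν₂ s))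
      (-2 * ((x₁ t - x₂ t) ⬝ᵥ ((H - α • (Eᵀ * E) - (α / 4) • (H * H)) *ᵥ (x₁ t - x₂ t)))
        - 2 * α * ((Eᵀ *ᵥ (ν₁ t - ν₂ t) + (1 / 2 : ℝ) • (H *ᵥ (x₁ t - x₂ t))) ⬝ᵥ
            (Eᵀ *ᵥ (ν₁ t - ν₂ t) + (1 / 2 : ℝ) • (H *ᵥ (x₁ t - x₂ t))))) t :=
  hasDerivAt_weightedNormSq_of_linear_flow hH E α (hasDerivAt_primal_sub h₁x h₂x)
    (hasDerivAt_dual_sub h₁ν h₂ν)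

end PrimalDual

/-- For the quadratic objective `g(x) = (1/2)xᵀHx + cᵀx` (so
`∇g(x) = Hx + c`), `H` symmetric positive definite, and `0 < α < 1/‖E‖₂`, any two
solutions of the primal-dual dynamics satisfy, with `δx = x₁ - x₂`, `δν = ν₁ - ν₂`,
`(d/dt)[‖δx + αEᵀδν‖₂² + δνᵀ(I - α²EEᵀ)δν]
  = -2 δxᵀ(H - αEᵀE - (α/4)H²)δx - 2α‖Eᵀδν + (1/2)Hδx‖₂²`. -/
theorem stmt6 {n m : ℕ} (H : Matrix (Fin n) (Fin n) ℝ) (hH : H.PosDef)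
    (c : Fin n → ℝ) (E : Matrix (Fin m) (Fin n) ℝ) (q : Fin m → ℝ)
    (α : ℝ) (hα0 : 0 < α) (hα : α < 1 / spectralNorm2 E)
    (x₁ x₂ : ℝ → Fin n → ℝ) (ν₁ ν₂ : ℝ → Fin m → ℝ)
    (h₁x : ∀ t, HasDerivAt x₁ (-(H *ᵥ x₁ t) - c - Eᵀ *ᵥ ν₁ t) t)
    (h₁ν : ∀ t, HasDerivAt ν₁ (E *ᵥ x₁ t - q) t)
    (h₂x : ∀ t, HasDerivAt x₂ (-(H *ᵥ x₂ t) - c - Eᵀ *ᵥ ν₂ t) t)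
    (h₂ν : ∀ t, HasDerivAt ν₂ (E *ᵥ x₂ t - q) t) :
    ∀ t : ℝ,
      HasDerivAt
        (fun s =>
          ((x₁ s - x₂ s) + α • (Eᵀ *ᵥ (ν₁ s - ν₂ s))) ⬝ᵥ
              ((x₁ s - x₂ s) + α • (Eᵀ *ᵥ (ν₁ s - ν₂ s))) +
            (ν₁ s - ν₂ s) ⬝ᵥ ((1 - α ^ 2 • (E * Eᵀ)) *ᵥ (ν₁ s - ν₂ s)))
        (-2 * ((x₁ t - x₂ t) ⬝ᵥ ((H - α • (Eᵀ * E) - (α / 4) • (H * H)) *ᵥ (x₁ t - x₂ t)))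
          - 2 * α * ((Eᵀ *ᵥ (ν₁ t - ν₂ t) + (1 / 2 : ℝ) • (H *ᵥ (x₁ t - x₂ t))) ⬝ᵥ
              (Eᵀ *ᵥ (ν₁ t - ν₂ t) + (1 / 2 : ℝ) • (H *ᵥ (x₁ t - x₂ t))))) t := by
  have hsymm : H.IsSymm := isHermitian_iff_isSymm.1 hH.isHermitian
  exact fun t => stmt6_general hsymm E α (h₁x t) (h₁ν t) (h₂x t) (h₂ν t)
end

section
/- (Corollary 1.) Let Θ be an invertible N×N real matrix, β > 0, let f : ℝᴺ × ℝ → ℝᴺ satisfy ⟨Θ(f(a,t) − f(b,t)), Θ(a − b)⟩ ≤ −β‖Θ(a − b)‖₂² for all a, b, t, let z solve ż = f(z, t) and let z* be differentiable with f(z*(t), t) = 0 for all t and M := sup_{t ≥ 0} ‖Θż*(t)‖₂ < ∞. Then for all t ≥ 0, ‖Θ(z(t) − z*(t))‖₂ ≤ e^{−βt}‖Θ(z(0) − z*(0))‖₂ + (M/β)(1 − e^{−βt}); in particular limsup_{t→∞} ‖Θ(z(t) − z*(t))‖₂ ≤ M/β. -/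
open Matrix

/-!
The deviation `w = Θ(z - z*)` satisfies `⟪w', w⟫ ≤ -β‖w‖² + M‖w‖`: contraction gives the first
term, Cauchy–Schwarz applied to `Θż*` the second. Formally this is `‖w‖' ≤ -β‖w‖ + M`, and the
bound is Grönwall's inequality. Since `‖w‖` need not be differentiable where `w` vanishes, the
inequality is applied to `√(‖w‖² + η²)`, which satisfies it up to an error that tends to `0`
with `η`.
-/

open Filter Set
open scoped Topology RealInnerProductSpace

lemma continuous_gronwallBound_δ_ε (K x : ℝ) :
    Continuous fun p : ℝ × ℝ => gronwallBound p.1 K p.2 x := by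
  rcases eq_or_ne K 0 with rfl | hK
  · simp only [gronwallBound_K0]
    fun_prop
  · simp only [gronwallBound_of_K_ne_0 hK]
    fun_prop

lemma gronwallBound_neg {β : ℝ} (hβ : β ≠ 0) (δ ε t : ℝ) :
    gronwallBound δ (-β) ε t =
      Real.exp (-β * t) * δ + ε / β * (1 - Real.exp (-β * t)) := by
  rw [gronwallBound_of_K_ne_0 (neg_ne_zero.mpr hβ), div_neg]
  ring

lemma tendsto_gronwallBound_neg_atTop {β : ℝ} (hβ : 0 < β) (δ ε : ℝ) :
    Tendsto (gronwallBound δ (-β) ε) atTop (𝓝 (ε / β)) := by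
  have exp_tendsto : Tendsto (fun t : ℝ => Real.exp (-β * t)) atTop (𝓝 0) :=
    Real.tendsto_exp_atBot.comp (tendsto_id.const_mul_atTop_of_neg (neg_lt_zero.mpr hβ))
  have := (exp_tendsto.mul_const δ).add ((exp_tendsto.const_sub 1).const_mul (ε / β))
  simpa only [zero_mul, sub_zero, mul_one, zero_add, ← gronwallBound_neg hβ.ne'] using this

lemma mul_sq_add_mul_div_sqrt_le {η ε : ℝ} (hη : 0 < η) (hε : 0 ≤ ε) (K r : ℝ) :
    (K * r ^ 2 + ε * r) / √(r ^ 2 + η ^ 2) ≤ K * √(r ^ 2 + η ^ 2) + (ε + |K| * η) := by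
  set ρ := √(r ^ 2 + η ^ 2)
  have hρ_sq : ρ ^ 2 = r ^ 2 + η ^ 2 := Real.sq_sqrt (by positivity)
  have hρ : 0 < ρ := Real.sqrt_pos.mpr (by positivity)
  have hrρ : r ≤ ρ := Real.le_sqrt_of_sq_le (le_add_of_nonneg_right (sq_nonneg η))
  have hηρ : η ≤ ρ := Real.le_sqrt_of_sq_le (le_add_of_nonneg_left (sq_nonneg r))
  have error_le : -K * η ^ 2 ≤ |K| * η * ρ :=
    calc -K * η ^ 2 ≤ |K| * η ^ 2 := by gcongr; exact neg_le_abs K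
      _ = |K| * η * η := by ring
      _ ≤ |K| * η * ρ := by gcongr
  rw [div_le_iff₀ hρ]
  calc K * r ^ 2 + ε * r = K * ρ ^ 2 + ε * r + -K * η ^ 2 := by rw [hρ_sq]; ring
    _ ≤ K * ρ ^ 2 + ε * ρ + |K| * η * ρ := by gcongr
    _ = (K * ρ + (ε + |K| * η)) * ρ := by ring

section InnerGronwall

variable {F : Type*} [NormedAddCommGroup F] [InnerProductSpace ℝ F]

lemma hasDerivWithinAt_sqrt_norm_sq_add_sq {w : ℝ → F} {w' : F} {s : Set ℝ} {x η : ℝ}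
    (hη : η ≠ 0) (hw : HasDerivWithinAt w w' s x) :
    HasDerivWithinAt (fun t => √(‖w t‖ ^ 2 + η ^ 2))
      (⟪w', w x⟫ / √(‖w x‖ ^ 2 + η ^ 2)) s x := by
  refine ((hw.norm_sq.add_const (η ^ 2)).sqrt (by positivity)).congr_deriv ?_
  rw [real_inner_comm, mul_div_mul_left _ _ two_ne_zero]

variable {w w' : ℝ → F} {δ K ε a b : ℝ}

lemma sqrt_norm_sq_add_sq_le_gronwallBound {η : ℝ} (hη : 0 < η)
    (hw : ContinuousOn w (Icc a b))
    (hw' : ∀ x ∈ Ico a b, HasDerivWithinAt w (w' x) (Ici x) x)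
    (ha : ‖w a‖ ≤ δ) (hε : 0 ≤ ε)
    (bound : ∀ x ∈ Ico a b, ⟪w' x, w x⟫ ≤ K * ‖w x‖ ^ 2 + ε * ‖w x‖) :
    ∀ x ∈ Icc a b,
      √(‖w x‖ ^ 2 + η ^ 2) ≤ gronwallBound (δ + η) K (ε + |K| * η) (x - a) := by
  refine le_gronwallBound_of_liminf_deriv_right_le (by fun_prop)
    (fun x hx _ hr =>
      (hasDerivWithinAt_sqrt_norm_sq_add_sq hη.ne' (hw' x hx)).liminf_right_slope_le hr)
    ?_ fun x hx => ?_
  · calc √(‖w a‖ ^ 2 + η ^ 2) ≤ ‖w a‖ + η :=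
          Real.sqrt_le_iff.mpr ⟨by positivity, by nlinarith [norm_nonneg (w a)]⟩
      _ ≤ δ + η := by gcongr
  · calc ⟪w' x, w x⟫ / √(‖w x‖ ^ 2 + η ^ 2)
        ≤ (K * ‖w x‖ ^ 2 + ε * ‖w x‖) / √(‖w x‖ ^ 2 + η ^ 2) := by gcongr; exact bound x hx
      _ ≤ K * √(‖w x‖ ^ 2 + η ^ 2) + (ε + |K| * η) := mul_sq_add_mul_div_sqrt_le hη hε K ‖w x‖

theorem norm_le_gronwallBound_of_inner_deriv_right_le
    (hw : ContinuousOn w (Icc a b))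
    (hw' : ∀ x ∈ Ico a b, HasDerivWithinAt w (w' x) (Ici x) x)
    (ha : ‖w a‖ ≤ δ) (hε : 0 ≤ ε)
    (bound : ∀ x ∈ Ico a b, ⟪w' x, w x⟫ ≤ K * ‖w x‖ ^ 2 + ε * ‖w x‖) :
    ∀ x ∈ Icc a b, ‖w x‖ ≤ gronwallBound δ K ε (x - a) := by
  intro x hx
  have regularized : ∀ η > 0, ‖w x‖ ≤ gronwallBound (δ + η) K (ε + |K| * η) (x - a) :=
    fun η hη => (Real.le_sqrt_of_sq_le (le_add_of_nonneg_right (sq_nonneg η))).trans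
      (sqrt_norm_sq_add_sq_le_gronwallBound hη hw hw' ha hε bound x hx)
  have bound_continuous :
      Continuous fun η : ℝ => gronwallBound (δ + η) K (ε + |K| * η) (x - a) :=
    (continuous_gronwallBound_δ_ε K (x - a)).comp
      (f := fun η : ℝ => (δ + η, ε + |K| * η)) (by fun_prop)
  have bound_tendsto := (bound_continuous.tendsto 0).mono_left (nhdsWithin_le_nhds (s := Ioi 0))
  simp only [add_zero, mul_zero] at bound_tendsto
  exact ge_of_tendsto bound_tendsto (eventually_mem_nhdsWithin.mono regularized)

end InnerGronwall

section Contraction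

variable {E F : Type*} [NormedAddCommGroup E] [NormedSpace ℝ E]
  [NormedAddCommGroup F] [InnerProductSpace ℝ F]

/-- The vector field `g` is `β`-contracting in the constant metric `Θ`: along `g`, the seminorm
`‖Θ(x - y)‖` of the difference of two trajectories decays at rate `β`. The metric is
encoded by a continuous linear map `Θ` into an inner product space and may be degenerate. -/
def IsContracting (Θ : E →L[ℝ] F) (β : ℝ) (g : E → E) : Prop :=
  ∀ x y, ⟪Θ (g x - g y), Θ (x - y)⟫ ≤ -β * ‖Θ (x - y)‖ ^ 2

variable {Θ : E →L[ℝ] F} {β M : ℝ}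

lemma IsContracting.inner_map_sub_le {g : E → E} (hg : IsContracting Θ β g) {x y v : E}
    (hv : ‖Θ (g y - v)‖ ≤ M) :
    ⟪Θ (g x - v), Θ (x - y)⟫ ≤ -β * ‖Θ (x - y)‖ ^ 2 + M * ‖Θ (x - y)‖ :=
  calc ⟪Θ (g x - v), Θ (x - y)⟫
      = ⟪Θ (g x - g y), Θ (x - y)⟫ + ⟪Θ (g y - v), Θ (x - y)⟫ := by
        rw [← inner_add_left, ← map_add, sub_add_sub_cancel]
    _ ≤ -β * ‖Θ (x - y)‖ ^ 2 + ‖Θ (g y - v)‖ * ‖Θ (x - y)‖ :=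
        add_le_add (hg x y) (real_inner_le_norm _ _)
    _ ≤ -β * ‖Θ (x - y)‖ ^ 2 + M * ‖Θ (x - y)‖ := by gcongr

variable {f : E → ℝ → E}

theorem norm_map_sub_le_gronwallBound_of_approx_trajectory {x y y' : ℝ → E} {a b : ℝ}
    (hf : ∀ t ∈ Ico a b, IsContracting Θ β (f · t))
    (hx : ContinuousOn x (Icc a b))
    (hx' : ∀ t ∈ Ico a b, HasDerivWithinAt x (f (x t) t) (Ici t) t)
    (hy : ContinuousOn y (Icc a b))
    (hy' : ∀ t ∈ Ico a b, HasDerivWithinAt y (y' t) (Ici t) t)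
    (hM : 0 ≤ M) (hdefect : ∀ t ∈ Ico a b, ‖Θ (f (y t) t - y' t)‖ ≤ M) :
    ∀ t ∈ Icc a b, ‖Θ (x t - y t)‖ ≤ gronwallBound ‖Θ (x a - y a)‖ (-β) M (t - a) :=
  norm_le_gronwallBound_of_inner_deriv_right_le (Θ.continuous.comp_continuousOn (hx.sub hy))
    (fun t ht => Θ.hasFDerivAt.comp_hasDerivWithinAt t ((hx' t ht).sub (hy' t ht))) le_rfl hM
    fun t ht => (hf t ht).inner_map_sub_le (hdefect t ht)

variable {z zs zs' : ℝ → E}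

theorem norm_map_sub_optimum_le_gronwallBound
    (hf : ∀ t, 0 ≤ t → IsContracting Θ β (f · t))
    (hz : ∀ t, 0 ≤ t → HasDerivWithinAt z (f (z t) t) (Ici 0) t)
    (hzs : ∀ t, 0 ≤ t → HasDerivWithinAt zs (zs' t) (Ici 0) t)
    (hopt : ∀ t, 0 ≤ t → f (zs t) t = 0)
    (hM : ∀ t, 0 ≤ t → ‖Θ (zs' t)‖ ≤ M) {t : ℝ} (ht : 0 ≤ t) :
    ‖Θ (z t - zs t)‖ ≤ gronwallBound ‖Θ (z 0 - zs 0)‖ (-β) M t := by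
  have hdefect : ∀ s, 0 ≤ s → ‖Θ (f (zs s) s - zs' s)‖ ≤ M := fun s hs => by
    rw [hopt s hs, zero_sub, map_neg, norm_neg]
    exact hM s hs
  have tracking := norm_map_sub_le_gronwallBound_of_approx_trajectory (b := t)
    (fun s hs => hf s hs.1)
    (fun s hs => (hz s hs.1).continuousWithinAt.mono Icc_subset_Ici_self)
    (fun s hs => (hz s hs.1).mono (Ici_subset_Ici.mpr hs.1))
    (fun s hs => (hzs s hs.1).continuousWithinAt.mono Icc_subset_Ici_self)
    (fun s hs => (hzs s hs.1).mono (Ici_subset_Ici.mpr hs.1))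
    ((norm_nonneg _).trans (hM 0 le_rfl)) (fun s hs => hdefect s hs.1) t ⟨ht, le_rfl⟩
  rwa [sub_zero] at tracking

theorem stmt9_general (hβ : 0 < β)
    (hf : ∀ t, 0 ≤ t → IsContracting Θ β (f · t))
    (hz : ∀ t, 0 ≤ t → HasDerivWithinAt z (f (z t) t) (Ici 0) t)
    (hzs : ∀ t, 0 ≤ t → HasDerivWithinAt zs (zs' t) (Ici 0) t)
    (hopt : ∀ t, 0 ≤ t → f (zs t) t = 0)
    (hM : ∀ t, 0 ≤ t → ‖Θ (zs' t)‖ ≤ M) :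
    (∀ t, 0 ≤ t → ‖Θ (z t - zs t)‖ ≤
      Real.exp (-β * t) * ‖Θ (z 0 - zs 0)‖ + M / β * (1 - Real.exp (-β * t))) ∧
    limsup (fun t => ‖Θ (z t - zs t)‖) atTop ≤ M / β := by
  have tracking : ∀ t, 0 ≤ t →
      ‖Θ (z t - zs t)‖ ≤ gronwallBound ‖Θ (z 0 - zs 0)‖ (-β) M t :=
    fun t ht => norm_map_sub_optimum_le_gronwallBound hf hz hzs hopt hM ht
  have bound_tendsto := tendsto_gronwallBound_neg_atTop hβ ‖Θ (z 0 - zs 0)‖ M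
  refine ⟨fun t ht => (tracking t ht).trans_eq (gronwallBound_neg hβ.ne' _ _ _), ?_⟩
  rw [← bound_tendsto.limsup_eq]
  exact limsup_le_limsup ((eventually_ge_atTop 0).mono tracking)
    (.of_frequently_ge (Frequently.of_forall fun _ => norm_nonneg _))
    bound_tendsto.isBoundedUnder_le

end Contraction

section EuclideanMulVec

variable {m n : Type*} [Fintype m] [Fintype n]

/-- Multiplication by the real matrix `A`, with values in Euclidean space, so that
`‖euclideanMulVec A v‖` is the `ℓ²` norm `‖Av‖₂`; the sup norm on the domain `n → ℝ` serves only
to differentiate curves. -/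
noncomputable def euclideanMulVec (A : Matrix m n ℝ) : (n → ℝ) →L[ℝ] EuclideanSpace ℝ m :=
  (PiLp.continuousLinearEquiv 2 ℝ fun _ : m => ℝ).symm.toContinuousLinearMap ∘L
    A.mulVecLin.toContinuousLinearMap

lemma inner_euclideanMulVec (A : Matrix m n ℝ) (u v : n → ℝ) :
    ⟪euclideanMulVec A u, euclideanMulVec A v⟫ = (A *ᵥ u) ⬝ᵥ (A *ᵥ v) :=
  dotProduct_comm _ _

lemma norm_euclideanMulVec (A : Matrix m n ℝ) (v : n → ℝ) :
    ‖euclideanMulVec A v‖ = √((A *ᵥ v) ⬝ᵥ (A *ᵥ v)) := by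
  rw [norm_eq_sqrt_real_inner, inner_euclideanMulVec]

lemma isContracting_euclideanMulVec_iff {A : Matrix m n ℝ} {β : ℝ} {g : (n → ℝ) → n → ℝ} :
    IsContracting (euclideanMulVec A) β g ↔
      ∀ x y, (A *ᵥ (g x - g y)) ⬝ᵥ (A *ᵥ (x - y)) ≤
        -β * ((A *ᵥ (x - y)) ⬝ᵥ (A *ᵥ (x - y))) := by
  simp only [IsContracting, ← real_inner_self_eq_norm_sq, inner_euclideanMulVec]

end EuclideanMulVec

/-- **Corollary 1.** If `f` is `β`-contracting in the constant metric `Θ`,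
`z` solves `ż = f(z,t)`, `z*` is a differentiable curve of instantaneous optima
(`f(z*(t),t) = 0`) whose speed in the metric is bounded by `M = sup_{t≥0} ‖Θż*‖₂ < ∞`,
then for all `t ≥ 0`,
`‖Θ(z(t) - z*(t))‖₂ ≤ e^{-βt}‖Θ(z(0) - z*(0))‖₂ + (M/β)(1 - e^{-βt})`;
in particular `limsup_{t→∞} ‖Θ(z(t) - z*(t))‖₂ ≤ M/β`. -/
theorem stmt9 {N : ℕ} (Θ : Matrix (Fin N) (Fin N) ℝ) (hΘ : IsUnit Θ)
    (β : ℝ) (hβ : 0 < β)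
    (f : (Fin N → ℝ) → ℝ → (Fin N → ℝ))
    (hf : ∀ (a b : Fin N → ℝ) (t : ℝ),
      (Θ *ᵥ (f a t - f b t)) ⬝ᵥ (Θ *ᵥ (a - b)) ≤
        -β * ((Θ *ᵥ (a - b)) ⬝ᵥ (Θ *ᵥ (a - b))))
    (z zs zs' : ℝ → Fin N → ℝ)
    (hz : ∀ t, HasDerivAt z (f (z t) t) t)
    (hzs : ∀ t, HasDerivAt zs (zs' t) t)
    (hopt : ∀ t, f (zs t) t = 0)
    (M : ℝ) (hM : ∀ t : ℝ, 0 ≤ t → Real.sqrt ((Θ *ᵥ zs' t) ⬝ᵥ (Θ *ᵥ zs' t)) ≤ M) :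
    (∀ t : ℝ, 0 ≤ t →
      Real.sqrt ((Θ *ᵥ (z t - zs t)) ⬝ᵥ (Θ *ᵥ (z t - zs t))) ≤
        Real.exp (-β * t) * Real.sqrt ((Θ *ᵥ (z 0 - zs 0)) ⬝ᵥ (Θ *ᵥ (z 0 - zs 0))) +
          (M / β) * (1 - Real.exp (-β * t))) ∧
    Filter.limsup (fun t => Real.sqrt ((Θ *ᵥ (z t - zs t)) ⬝ᵥ (Θ *ᵥ (z t - zs t))))
        Filter.atTop ≤ M / β := by
  simp only [← norm_euclideanMulVec] at hM ⊢
  exact stmt9_general hβ (fun t _ => isContracting_euclideanMulVec_iff.mpr fun a b => hf a b t)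
    (fun t _ => (hz t).hasDerivWithinAt) (fun t _ => (hzs t).hasDerivWithinAt)
    (fun t _ => hopt t) hM
end
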